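/- For all n ≥ 2 and m ≥ 1, there is a surjective lattice homomorphism from H_n onto H_m: a surjective map from the free Heyting algebra on n generators onto the free Heyting algebra on m generators preserving ∧ and ∨. -/

import Mathlib

/-!
The argument is an Artin gluing. Let `A` be the power set of the set `P` of the `2 ^ n` classical
valuations of `x_1, …, x_n`, and let `B = H_m`. A map `N : A → B` preserving finite meets gives
a Heyting algebra `Glue N = {(a, b) | b ≤ N a}` (in Kripke terms: points of `P` are put on top of
a model of `m` variables), whose projection to `B` preserves `∧` and `∨`, though not `→`.
Sending `x_k` to `({valuations making x_k true}, ⊥)` extends to a Heyting homomorphism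
`H_n → Glue N`, and the required map is its composite with the projection (`glueHom`).

When `m < 2 ^ n`, choose distinct valuations `g_1, …, g_m`, all different from the all-true
valuation `t`, and let `N a` be the meet of the `x_i` with `g_i ∉ a`, and of `⊥` if `t ∉ a`. The
formula `χ_s` describing a valuation `s` has value `({s}, ⊥)`: if some variable is false at `s`,
then `χ_s` entails the negation of that variable, which fails at `t`. Hence the disjunction of all
`χ_s` has value `(⊤, ⊥)`, and `¬ χ_{g_i}` has value `({g_i}ᶜ, x_i)`. So the image of `H_n`
contains every `(⊤, x_i)`, and then, by induction on formulas, every `(⊤, b)`; this is surjectivity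
(`latticeOnto_of_lt_two_pow`). As `n + 1 < 2 ^ n` for `n ≥ 2`, iterating `H_n → H_{n+1}` reaches
every `m`.
-/

/-- Propositional formulas over a set `V` of variables, built from `∧, ∨, →, ⊥, ⊤`.
`¬φ` is the abbreviation `φ → ⊥`. -/
inductive PropForm (V : Type) : Type
  | var : V → PropForm V
  | bot : PropForm V
  | top : PropForm V
  | and : PropForm V → PropForm V → PropForm V
  | or : PropForm V → PropForm V → PropForm V
  | imp : PropForm V → PropForm V → PropForm V

/-- A natural-deduction style consequence relation.  When the parameter `cl` is `False`
this is exactly the consequence relation `⊢` of intuitionistic propositional logic;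
when `cl` is `True` the rule of excluded middle becomes available and it is the
consequence relation `⊢_C` of classical propositional logic. -/
inductive Prov {V : Type} (cl : Prop) : Set (PropForm V) → PropForm V → Prop
  | ax : ∀ {Γ : Set (PropForm V)} {φ}, φ ∈ Γ → Prov cl Γ φ
  | topI : ∀ {Γ}, Prov cl Γ .top
  | botE : ∀ {Γ φ}, Prov cl Γ .bot → Prov cl Γ φ
  | andI : ∀ {Γ φ ψ}, Prov cl Γ φ → Prov cl Γ ψ → Prov cl Γ (.and φ ψ)
  | andE1 : ∀ {Γ φ ψ}, Prov cl Γ (.and φ ψ) → Prov cl Γ φ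
  | andE2 : ∀ {Γ φ ψ}, Prov cl Γ (.and φ ψ) → Prov cl Γ ψ
  | orI1 : ∀ {Γ φ ψ}, Prov cl Γ φ → Prov cl Γ (.or φ ψ)
  | orI2 : ∀ {Γ φ ψ}, Prov cl Γ ψ → Prov cl Γ (.or φ ψ)
  | orE : ∀ {Γ φ ψ χ}, Prov cl Γ (.or φ ψ) → Prov cl (insert φ Γ) χ →
      Prov cl (insert ψ Γ) χ → Prov cl Γ χ
  | impI : ∀ {Γ φ ψ}, Prov cl (insert φ Γ) ψ → Prov cl Γ (.imp φ ψ)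
  | impE : ∀ {Γ φ ψ}, Prov cl Γ (.imp φ ψ) → Prov cl Γ φ → Prov cl Γ ψ
  | em : ∀ {Γ φ}, cl → Prov cl Γ (.or φ (.imp φ .bot))

/-- Intuitionistic consequence `Γ ⊢ φ`. -/
abbrev IProv {V : Type} (Γ : Set (PropForm V)) (φ : PropForm V) : Prop := Prov False Γ φ

/-- Classical consequence `Γ ⊢_C φ`. -/
abbrev CProv {V : Type} (Γ : Set (PropForm V)) (φ : PropForm V) : Prop := Prov True Γ φ

theorem Prov.mono {V : Type} {cl : Prop} {Γ : Set (PropForm V)} {φ : PropForm V}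
    (h : Prov cl Γ φ) : ∀ {Δ : Set (PropForm V)}, Γ ⊆ Δ → Prov cl Δ φ := by
  induction h with
  | ax hmem => intro Δ hsub; exact Prov.ax (hsub hmem)
  | topI => intro Δ _; exact Prov.topI
  | botE _ ih => intro Δ hsub; exact Prov.botE (ih hsub)
  | andI _ _ ih1 ih2 => intro Δ hsub; exact Prov.andI (ih1 hsub) (ih2 hsub)
  | andE1 _ ih => intro Δ hsub; exact Prov.andE1 (ih hsub)
  | andE2 _ ih => intro Δ hsub; exact Prov.andE2 (ih hsub)
  | orI1 _ ih => intro Δ hsub; exact Prov.orI1 (ih hsub)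
  | orI2 _ ih => intro Δ hsub; exact Prov.orI2 (ih hsub)
  | orE _ _ _ ih1 ih2 ih3 =>
      intro Δ hsub
      exact Prov.orE (ih1 hsub) (ih2 (Set.insert_subset_insert hsub))
        (ih3 (Set.insert_subset_insert hsub))
  | impI _ ih => intro Δ hsub; exact Prov.impI (ih (Set.insert_subset_insert hsub))
  | impE _ _ ih1 ih2 => intro Δ hsub; exact Prov.impE (ih1 hsub) (ih2 hsub)
  | em hcl => intro Δ _; exact Prov.em hcl

theorem Prov.cut {V : Type} {cl : Prop} {Γ : Set (PropForm V)} {φ ψ : PropForm V}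
    (h1 : Prov cl Γ φ) (h2 : Prov cl (insert φ Γ) ψ) : Prov cl Γ ψ :=
  Prov.impE (Prov.impI h2) h1

/-- Single-premise consequence: `φ ⊢ ψ` (intuitionistic when `cl = False`). -/
def Entails {V : Type} (cl : Prop) (φ ψ : PropForm V) : Prop := Prov cl {φ} ψ

theorem Entails.refl {V : Type} {cl : Prop} (φ : PropForm V) : Entails cl φ φ := Prov.ax rfl

theorem Entails.trans' {V : Type} {cl : Prop} {φ ψ χ : PropForm V}
    (h1 : Entails cl φ ψ) (h2 : Entails cl ψ χ) : Entails cl φ χ :=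
  Prov.cut h1 (h2.mono (Set.singleton_subset_iff.mpr (Set.mem_insert _ _)))

theorem Entails.and_congr {V : Type} {cl : Prop} {a b c d : PropForm V}
    (h1 : Entails cl a b) (h2 : Entails cl c d) :
    Entails cl (PropForm.and a c) (PropForm.and b d) := by
  have ha : Prov cl ({PropForm.and a c} : Set (PropForm V)) a := Prov.andE1 (Prov.ax rfl)
  have hc : Prov cl ({PropForm.and a c} : Set (PropForm V)) c := Prov.andE2 (Prov.ax rfl)
  exact Prov.andI
    (Prov.cut ha (h1.mono (Set.singleton_subset_iff.mpr (Set.mem_insert _ _))))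
    (Prov.cut hc (h2.mono (Set.singleton_subset_iff.mpr (Set.mem_insert _ _))))

theorem Entails.or_congr {V : Type} {cl : Prop} {a b c d : PropForm V}
    (h1 : Entails cl a b) (h2 : Entails cl c d) :
    Entails cl (PropForm.or a c) (PropForm.or b d) :=
  Prov.orE (Prov.ax rfl)
    (Prov.orI1 (h1.mono (Set.singleton_subset_iff.mpr (Set.mem_insert _ _))))
    (Prov.orI2 (h2.mono (Set.singleton_subset_iff.mpr (Set.mem_insert _ _))))

/-- Logical equivalence (intuitionistic when `cl = False`, classical when `cl = True`). -/
def provSetoid (cl : Prop) (V : Type) : Setoid (PropForm V) where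
  r φ ψ := Entails cl φ ψ ∧ Entails cl ψ φ
  iseqv := ⟨fun φ => ⟨Entails.refl φ, Entails.refl φ⟩, fun h => ⟨h.2, h.1⟩,
    fun h1 h2 => ⟨h1.1.trans' h2.1, h2.2.trans' h1.2⟩⟩

/-- The Lindenbaum algebra of formulas over `V` modulo logical equivalence.
`Lindenbaum False (Fin n)` is the free Heyting algebra `H_n`,
`Lindenbaum False ℕ` is `H_ω`, and `Lindenbaum True ℕ` is the free Boolean
algebra `B_ω`. -/
def Lindenbaum (cl : Prop) (V : Type) : Type := Quotient (provSetoid cl V)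

/-- The equivalence class of a formula. -/
def Lindenbaum.mk (cl : Prop) {V : Type} (φ : PropForm V) : Lindenbaum cl V :=
  Quotient.mk (provSetoid cl V) φ

/-- The order of the Lindenbaum algebra: `[φ] ≤ [ψ]` iff `φ ⊢ ψ`. -/
def Lindenbaum.le {cl : Prop} {V : Type} : Lindenbaum cl V → Lindenbaum cl V → Prop :=
  Quotient.lift₂ (Entails cl) (by
    intro a b a' b' ha hb
    obtain ⟨ha1, ha2⟩ := ha
    obtain ⟨hb1, hb2⟩ := hb
    exact propext ⟨fun h => (ha2.trans' h).trans' hb1, fun h => (ha1.trans' h).trans' hb2⟩)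

/-- The meet `∧` of the Lindenbaum algebra. -/
def Lindenbaum.inf {cl : Prop} {V : Type} :
    Lindenbaum cl V → Lindenbaum cl V → Lindenbaum cl V :=
  Quotient.map₂ PropForm.and (by
    intro a a' ha b b' hb
    obtain ⟨ha1, ha2⟩ := ha
    obtain ⟨hb1, hb2⟩ := hb
    exact ⟨ha1.and_congr hb1, ha2.and_congr hb2⟩)

/-- The join `∨` of the Lindenbaum algebra. -/
def Lindenbaum.sup {cl : Prop} {V : Type} :
    Lindenbaum cl V → Lindenbaum cl V → Lindenbaum cl V :=
  Quotient.map₂ PropForm.or (by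
    intro a a' ha b b' hb
    obtain ⟨ha1, ha2⟩ := ha
    obtain ⟨hb1, hb2⟩ := hb
    exact ⟨ha1.or_congr hb1, ha2.or_congr hb2⟩)

/-! ### The Lindenbaum algebra as a Heyting algebra -/

/-- The implication of the Lindenbaum algebra. -/
def Lindenbaum.himp {V : Type} :
    Lindenbaum False V → Lindenbaum False V → Lindenbaum False V :=
  Quotient.map₂ PropForm.imp (by
    intro a a' ha b b' hb
    have key : ∀ {a a' b b' : PropForm V}, Entails False a' a → Entails False b b' →
        Entails False (PropForm.imp a b) (PropForm.imp a' b') := by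
      intro a a' b b' h1 h2
      refine Prov.impI (Prov.cut (φ := b) (Prov.impE (φ := a) (Prov.ax (by simp)) ?_) ?_)
      · exact h1.mono (by simp)
      · exact h2.mono (by simp)
    exact ⟨key ha.2 hb.1, key ha.1 hb.2⟩)

instance Lindenbaum.instHeytingAlgebra (V : Type) : HeytingAlgebra (Lindenbaum False V) where
  le := Lindenbaum.le
  le_refl a := Quotient.inductionOn a fun φ => Entails.refl φ
  le_trans a b c := Quotient.inductionOn₃ a b c fun _ _ _ h1 h2 => Entails.trans' h1 h2
  le_antisymm a b := Quotient.inductionOn₂ a b fun _ _ h1 h2 => Quotient.sound ⟨h1, h2⟩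
  inf := Lindenbaum.inf
  sup := Lindenbaum.sup
  top := Lindenbaum.mk False .top
  bot := Lindenbaum.mk False .bot
  himp := Lindenbaum.himp
  compl a := Lindenbaum.himp a (Lindenbaum.mk False .bot)
  himp_bot _ := rfl
  le_top a := Quotient.inductionOn a fun _ => Prov.topI
  bot_le a := Quotient.inductionOn a fun _ => Prov.botE (Prov.ax rfl)
  inf_le_left a b := Quotient.inductionOn₂ a b fun _ _ => Prov.andE1 (Prov.ax rfl)
  inf_le_right a b := Quotient.inductionOn₂ a b fun _ _ => Prov.andE2 (Prov.ax rfl)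
  le_inf a b c := Quotient.inductionOn₃ a b c fun _ _ _ h1 h2 => Prov.andI h1 h2
  le_sup_left a b := Quotient.inductionOn₂ a b fun _ _ => Prov.orI1 (Prov.ax rfl)
  le_sup_right a b := Quotient.inductionOn₂ a b fun _ _ => Prov.orI2 (Prov.ax rfl)
  sup_le a b c := Quotient.inductionOn₃ a b c fun _ _ _ h1 h2 =>
    Prov.orE (Prov.ax rfl) (Prov.mono h1 (by simp)) (Prov.mono h2 (by simp))
  le_himp_iff a b c := Quotient.inductionOn₃ a b c fun φ ψ χ => by
    constructor
    · intro h
      have h1 : Prov False {φ.and ψ} (ψ.imp χ) :=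
        Prov.cut (Prov.andE1 (ψ := ψ) (Prov.ax rfl)) (Prov.mono h (by simp))
      exact Prov.impE h1 (Prov.andE2 (φ := φ) (Prov.ax rfl))
    · intro h
      have h1 : Prov False (insert ψ {φ}) (φ.and ψ) :=
        Prov.andI (Prov.ax (by simp)) (Prov.ax (by simp))
      exact Prov.impI (Prov.cut h1 (Prov.mono h (by simp)))

/-! ### Evaluation of formulas in Heyting algebras -/

/-- The value of a formula in a Heyting algebra under an assignment of its variables. -/
def PropForm.eval {V : Type} {C : Type*} [HeytingAlgebra C] (v : V → C) : PropForm V → C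
  | .var x => v x
  | .bot => ⊥
  | .top => ⊤
  | .and φ ψ => φ.eval v ⊓ ψ.eval v
  | .or φ ψ => φ.eval v ⊔ ψ.eval v
  | .imp φ ψ => φ.eval v ⇨ ψ.eval v

/-- Soundness of intuitionistic logic. The context may be infinite, so it is replaced by a common
lower bound `c` of the values of its members. -/
theorem Prov.le_eval {V : Type} {C : Type*} [HeytingAlgebra C] (v : V → C)
    {Γ : Set (PropForm V)} {φ : PropForm V} (h : Prov False Γ φ) :
    ∀ c : C, (∀ ψ ∈ Γ, c ≤ ψ.eval v) → c ≤ φ.eval v := by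
  have ins : ∀ {Γ : Set (PropForm V)} {c : C} {φ : PropForm V}, (∀ ψ ∈ Γ, c ≤ ψ.eval v) →
      ∀ ψ ∈ insert φ Γ, c ⊓ φ.eval v ≤ ψ.eval v := by
    rintro Γ c φ hc ψ (rfl | hψ)
    · exact inf_le_right
    · exact inf_le_left.trans (hc ψ hψ)
  induction h with
  | ax hmem => intro c hc; exact hc _ hmem
  | topI => intro c _; exact le_top
  | botE _ ih => intro c hc; exact (ih c hc).trans bot_le
  | andI _ _ ih1 ih2 => intro c hc; exact le_inf (ih1 c hc) (ih2 c hc)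
  | andE1 _ ih => intro c hc; exact (ih c hc).trans inf_le_left
  | andE2 _ ih => intro c hc; exact (ih c hc).trans inf_le_right
  | orI1 _ ih => intro c hc; exact (ih c hc).trans le_sup_left
  | orI2 _ ih => intro c hc; exact (ih c hc).trans le_sup_right
  | orE _ _ _ ih1 ih2 ih3 =>
      intro c hc
      have h1 := ih1 c hc
      have h2 := ih2 _ (ins hc)
      have h3 := ih3 _ (ins hc)
      calc c ≤ c ⊓ (_ ⊔ _) := le_inf le_rfl h1
        _ = _ := inf_sup_left _ _ _
        _ ≤ _ := sup_le h2 h3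
  | impI _ ih => intro c hc; exact le_himp_iff.mpr (ih _ (ins hc))
  | impE _ _ ih1 ih2 =>
      intro c hc
      exact (le_inf (ih1 c hc) (ih2 c hc)).trans himp_inf_le
  | em hcl => exact hcl.elim

theorem Entails.eval_le {V : Type} {C : Type*} [HeytingAlgebra C] (v : V → C)
    {φ ψ : PropForm V} (h : Entails False φ ψ) : φ.eval v ≤ ψ.eval v :=
  Prov.le_eval v h _ (by rintro _ rfl; exact le_rfl)

theorem exists_eval_eq_finset_inf {V : Type} {C ι : Type*} [HeytingAlgebra C] (v : V → C)
    (s : Finset ι) (f : ι → C) (hf : ∀ i ∈ s, f i ∈ Set.range (PropForm.eval v)) :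
    s.inf f ∈ Set.range (PropForm.eval v) := by
  classical
  induction s using Finset.induction_on with
  | empty => exact ⟨.top, rfl⟩
  | insert i s _ ih =>
      obtain ⟨φ, hφ⟩ := hf i (Finset.mem_insert_self i s)
      obtain ⟨ψ, hψ⟩ := ih fun j hj => hf j (Finset.mem_insert_of_mem hj)
      exact ⟨.and φ ψ, by simp [PropForm.eval, hφ, hψ, Finset.inf_insert]⟩

theorem exists_eval_eq_finset_sup {V : Type} {C ι : Type*} [HeytingAlgebra C] (v : V → C)
    (s : Finset ι) (f : ι → C) (hf : ∀ i ∈ s, f i ∈ Set.range (PropForm.eval v)) :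
    s.sup f ∈ Set.range (PropForm.eval v) := by
  classical
  induction s using Finset.induction_on with
  | empty => exact ⟨.bot, rfl⟩
  | insert i s _ ih =>
      obtain ⟨φ, hφ⟩ := hf i (Finset.mem_insert_self i s)
      obtain ⟨ψ, hψ⟩ := ih fun j hj => hf j (Finset.mem_insert_of_mem hj)
      exact ⟨.or φ ψ, by simp [PropForm.eval, hφ, hψ, Finset.sup_insert]⟩

/-! ### Artin gluing -/

/-- The Artin gluing of the Heyting algebras `A` and `B` along a finite-meet-preserving map
`N : A → B`: the pairs `(a, b)` with `b ≤ N a`, ordered componentwise. -/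
def Glue {A B : Type*} [HeytingAlgebra A] [HeytingAlgebra B] (N : InfTopHom A B) : Type _ :=
  {c : A × B // c.2 ≤ N c.1}

/-- Meets and joins of the gluing are componentwise; in an implication the second component has
to be cut down by the value of `N` at the first. -/
instance Glue.instHeytingAlgebra {A B : Type*} [HeytingAlgebra A] [HeytingAlgebra B]
    (N : InfTopHom A B) : HeytingAlgebra (Glue N) where
  le c d := c.1 ≤ d.1
  le_refl c := le_refl c.1
  le_trans _ _ _ h1 h2 := le_trans h1 h2
  le_antisymm _ _ h1 h2 := Subtype.ext (le_antisymm h1 h2)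
  inf c d := ⟨c.1 ⊓ d.1, by
    change c.1.2 ⊓ d.1.2 ≤ N (c.1.1 ⊓ d.1.1)
    rw [map_inf]
    exact inf_le_inf c.2 d.2⟩
  sup c d := ⟨c.1 ⊔ d.1, sup_le
    (c.2.trans (OrderHomClass.mono N le_sup_left)) (d.2.trans (OrderHomClass.mono N le_sup_right))⟩
  top := ⟨⊤, by change ⊤ ≤ N ⊤; rw [map_top]⟩
  bot := ⟨⊥, bot_le⟩
  himp c d := ⟨(c.1.1 ⇨ d.1.1, (c.1.2 ⇨ d.1.2) ⊓ N (c.1.1 ⇨ d.1.1)), inf_le_right⟩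
  compl c := ⟨(c.1.1 ⇨ ⊥, (c.1.2 ⇨ ⊥) ⊓ N (c.1.1 ⇨ ⊥)), inf_le_right⟩
  himp_bot _ := rfl
  le_top c := le_top (a := c.1)
  bot_le c := bot_le (a := c.1)
  inf_le_left c d := inf_le_left (a := c.1) (b := d.1)
  inf_le_right c d := inf_le_right (a := c.1) (b := d.1)
  le_inf c d e := le_inf (c := c.1) (a := d.1) (b := e.1)
  le_sup_left c d := le_sup_left (a := c.1) (b := d.1)
  le_sup_right c d := le_sup_right (a := c.1) (b := d.1)
  sup_le c d e := sup_le (a := c.1) (b := d.1) (c := e.1)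
  le_himp_iff c d e := by
    constructor
    · rintro ⟨h1, h2⟩
      exact ⟨le_himp_iff.mp h1, le_himp_iff.mp (h2.trans inf_le_left)⟩
    · rintro ⟨h1, h2⟩
      have h3 : c.1.1 ≤ d.1.1 ⇨ e.1.1 := le_himp_iff.mpr h1
      exact ⟨h3, le_inf (le_himp_iff.mpr h2) (c.2.trans (OrderHomClass.mono N h3))⟩

section Glue

variable {A B : Type*} [HeytingAlgebra A] [HeytingAlgebra B] {N : InfTopHom A B}

/-- The two components of an element of the gluing, as a lattice homomorphism. -/
def Glue.val (N : InfTopHom A B) : BoundedLatticeHom (Glue N) (A × B) where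
  toFun c := c.1
  map_inf' _ _ := rfl
  map_sup' _ _ := rfl
  map_top' := rfl
  map_bot' := rfl

theorem Glue.val_injective : Function.Injective (Glue.val N) := fun _ _ h => Subtype.ext h

theorem Glue.val_himp (c d : Glue N) : Glue.val N (c ⇨ d) =
    ((Glue.val N c).1 ⇨ (Glue.val N d).1,
      ((Glue.val N c).2 ⇨ (Glue.val N d).2) ⊓ N ((Glue.val N c).1 ⇨ (Glue.val N d).1)) := rfl

/-- The element `(a, ⊥)` of the gluing. -/
def Glue.inl (N : InfTopHom A B) (a : A) : Glue N := ⟨(a, ⊥), bot_le⟩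

theorem Glue.val_inl (a : A) : Glue.val N (Glue.inl N a) = (a, ⊥) := rfl

end Glue

/-- Evaluation of formulas in the gluing, followed by the projection to the second component. -/
def glueHom {V : Type} {A B : Type*} [HeytingAlgebra A] [HeytingAlgebra B] (N : InfTopHom A B)
    (v : V → Glue N) : Lindenbaum False V → B :=
  Quotient.lift (fun φ => (Glue.val N (φ.eval v)).2) fun _ _ h => by
    have := le_antisymm (h.1.eval_le v) (h.2.eval_le v)
    simp only [this]

/-- If the values of formulas in the gluing include `(⊤, ⊥)` and some `(a, x)` for each generator
`x` of the free algebra `B`, then they include every `(⊤, b)`. -/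
theorem glueHom_surjective {V W : Type} {A : Type*} [HeytingAlgebra A]
    (N : InfTopHom A (Lindenbaum False W)) (v : V → Glue N)
    (hbot : ∃ γ : PropForm V, Glue.val N (γ.eval v) = (⊤, ⊥))
    (hvar : ∀ w : W, ∃ ψ : PropForm V,
      (Glue.val N (ψ.eval v)).2 = Lindenbaum.mk False (.var w)) :
    Function.Surjective (glueHom N v) := by
  suffices h : ∀ φ : PropForm W, ∃ φ' : PropForm V,
      Glue.val N (φ'.eval v) = (⊤, Lindenbaum.mk False φ) by
    intro b
    induction b using Quotient.inductionOn with
    | _ φ =>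
      obtain ⟨φ', h'⟩ := h φ
      exact ⟨Lindenbaum.mk False φ', congrArg Prod.snd h'⟩
  intro φ
  induction φ with
  | var w =>
      obtain ⟨γ, hγ⟩ := hbot
      obtain ⟨ψ, hψ⟩ := hvar w
      refine ⟨.or ψ γ, ?_⟩
      rw [PropForm.eval, map_sup, hγ]
      ext
      · simp
      · simp [hψ]
  | bot => exact hbot
  | top => exact ⟨.top, rfl⟩
  | and φ ψ ih1 ih2 =>
      obtain ⟨φ', h1⟩ := ih1
      obtain ⟨ψ', h2⟩ := ih2
      refine ⟨.and φ' ψ', ?_⟩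
      rw [PropForm.eval, map_inf, h1, h2, Prod.mk_inf_mk, inf_idem]
      rfl
  | or φ ψ ih1 ih2 =>
      obtain ⟨φ', h1⟩ := ih1
      obtain ⟨ψ', h2⟩ := ih2
      refine ⟨.or φ' ψ', ?_⟩
      rw [PropForm.eval, map_sup, h1, h2, Prod.mk_sup_mk, sup_idem]
      rfl
  | imp φ ψ ih1 ih2 =>
      obtain ⟨φ', h1⟩ := ih1
      obtain ⟨ψ', h2⟩ := ih2
      refine ⟨.imp φ' ψ', ?_⟩
      rw [PropForm.eval, Glue.val_himp, h1, h2]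
      simp only [himp_self, map_top, inf_top_eq]
      rfl

/-! ### Gluing classical valuations onto a free algebra -/

open Classical in
/-- The gluing map `a ↦ ⋀ {y i | G i ∉ a}` from the power set of `P`, for points `G i` of `P`
labelled by elements `y i` of `B`. -/
noncomputable def missingMeet {P ι B : Type*} [Fintype ι] [HeytingAlgebra B]
    (G : ι → P) (y : ι → B) : InfTopHom (Set P) B where
  toFun a := Finset.univ.inf fun i => if G i ∈ a then ⊤ else y i
  map_inf' a b := by
    rw [← Finset.inf_inf]
    congr 1
    funext i
    by_cases ha : G i ∈ a <;> by_cases hb : G i ∈ b <;> simp [ha, hb]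
  map_top' := by simp

theorem missingMeet_le {P ι B : Type*} [Fintype ι] [HeytingAlgebra B]
    (G : ι → P) (y : ι → B) {a : Set P} {i : ι} (h : G i ∉ a) : missingMeet G y a ≤ y i := by
  classical
  refine (Finset.inf_le (Finset.mem_univ i)).trans ?_
  simp [h]

theorem missingMeet_compl_singleton {P ι B : Type*} [Fintype ι] [HeytingAlgebra B]
    (G : ι → P) (hG : Function.Injective G) (y : ι → B) (i : ι) :
    missingMeet G y {G i}ᶜ = y i := by
  classical
  refine le_antisymm (missingMeet_le G y (by simp)) (Finset.le_inf fun j _ => ?_)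
  by_cases h : j = i
  · subst h; simp
  · simp [hG.ne h]

/-- There is a surjective lattice homomorphism from `H_n` onto `H_m`. -/
def LatticeOnto (n m : ℕ) : Prop :=
  ∃ h : Lindenbaum False (Fin n) → Lindenbaum False (Fin m),
    Function.Surjective h ∧
    (∀ a b, h (Lindenbaum.inf a b) = Lindenbaum.inf (h a) (h b)) ∧
    (∀ a b, h (Lindenbaum.sup a b) = Lindenbaum.sup (h a) (h b))

theorem LatticeOnto.trans {k n m : ℕ} (h1 : LatticeOnto k n) (h2 : LatticeOnto n m) :
    LatticeOnto k m := by
  obtain ⟨f, hf, finf, fsup⟩ := h1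
  obtain ⟨g, hg, ginf, gsup⟩ := h2
  exact ⟨g ∘ f, hg.comp hf, fun a b => by simp [finf, ginf], fun a b => by simp [fsup, gsup]⟩

/-- A classical valuation is encoded as the set of variables it makes true. -/
theorem latticeOnto_of_lt_two_pow (n m : ℕ) (hn : 1 ≤ n) (hm : m < 2 ^ n) :
    LatticeOnto n m := by
  classical
  -- `some i` indexes the valuation labelled by the generator `x_i`, and `none` the all-true
  -- valuation, labelled by `⊥`.
  obtain ⟨G, hG, hGnone⟩ : ∃ G : Option (Fin m) → Set (Fin n),
      Function.Injective G ∧ G none = Set.univ := by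
    obtain ⟨e⟩ : Nonempty (Option (Fin m) ↪ Set (Fin n)) :=
      Function.Embedding.nonempty_of_card_le (by simpa using hm)
    exact ⟨Equiv.swap (e none) Set.univ ∘ e, (Equiv.injective _).comp e.injective, by simp⟩
  let y : Option (Fin m) → Lindenbaum False (Fin m) :=
    fun o => o.elim ⊥ fun i => Lindenbaum.mk False (.var i)
  let N := missingMeet G y
  let v : Fin n → Glue N := fun k => Glue.inl N {s | k ∈ s}
  have hNbot : ∀ a : Set (Set (Fin n)), Set.univ ∉ a → N a = ⊥ := fun a ha =>
    le_bot_iff.mp (missingMeet_le G y (i := none) (by rwa [hGnone]))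
  have hlit : ∀ (s : Set (Fin n)) (k : Fin n), ∃ φ : PropForm (Fin n),
      Glue.val N (φ.eval v) = ({t | k ∈ t ↔ k ∈ s}, ⊥) := by
    intro s k
    by_cases hk : k ∈ s
    · exact ⟨.var k, by simp [PropForm.eval, v, Glue.val_inl, hk]⟩
    · refine ⟨.imp (.var k) .bot, ?_⟩
      rw [PropForm.eval, Glue.val_himp]
      simp only [PropForm.eval, v, Glue.val_inl, map_bot, Prod.fst_bot, Prod.snd_bot, himp_bot]
      rw [hNbot _ (by simp), inf_bot_eq]
      simp [hk, Set.compl_ofPred]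
  have hchar : ∀ s : Set (Fin n), ∃ φ : PropForm (Fin n),
      Glue.val N (φ.eval v) = ({s}, ⊥) := by
    intro s
    choose φ hφ using hlit s
    obtain ⟨χ, hχ⟩ := exists_eval_eq_finset_inf v Finset.univ (fun k => (φ k).eval v)
      fun k _ => ⟨φ k, rfl⟩
    refine ⟨χ, ?_⟩
    rw [hχ, map_finset_inf]
    have hcomp : (⇑(Glue.val N) ∘ fun k => (φ k).eval v) =
        fun k => (({t | k ∈ t ↔ k ∈ s}, ⊥) : Set (Set (Fin n)) × Lindenbaum False (Fin m)) :=
      funext hφ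
    rw [hcomp]
    refine le_antisymm ?_ (Finset.le_inf fun k _ => ⟨?_, le_rfl⟩)
    · have hle := fun k => Finset.inf_le
        (f := fun k => (({t | k ∈ t ↔ k ∈ s}, ⊥) : Set (Set (Fin n)) × Lindenbaum False (Fin m)))
        (Finset.mem_univ k)
      -- The second component is `⊥` because there is at least one variable.
      exact ⟨fun t ht => Set.ext fun k => (hle k).1 ht, (hle ⟨0, hn⟩).2⟩
    · rintro t rfl
      exact Iff.rfl
  refine ⟨glueHom N v, glueHom_surjective N v ?_ ?_, ?_, ?_⟩
  · choose χ hχ using hchar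
    obtain ⟨γ, hγ⟩ := exists_eval_eq_finset_sup v Finset.univ (fun s => (χ s).eval v)
      fun s _ => ⟨χ s, rfl⟩
    refine ⟨γ, ?_⟩
    rw [hγ, map_finset_sup]
    have hcomp : (⇑(Glue.val N) ∘ fun s => (χ s).eval v) =
        fun s => (({s}, ⊥) : Set (Set (Fin n)) × Lindenbaum False (Fin m)) := funext hχ
    rw [hcomp]
    refine le_antisymm (Finset.sup_le fun s _ => ⟨le_top, le_rfl⟩) ⟨fun s _ => ?_, bot_le⟩
    exact (Finset.le_sup
      (f := fun s => (({s}, ⊥) : Set (Set (Fin n)) × Lindenbaum False (Fin m)))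
      (Finset.mem_univ s)).1 rfl
  · intro i
    obtain ⟨χ, hχ⟩ := hchar (G (some i))
    refine ⟨.imp χ .bot, ?_⟩
    rw [PropForm.eval, Glue.val_himp, hχ]
    simp only [PropForm.eval, map_bot, Prod.fst_bot, Prod.snd_bot, himp_bot, compl_bot,
      top_inf_eq]
    exact missingMeet_compl_singleton G hG y (some i)
  · intro a b
    exact Quotient.inductionOn₂ a b fun _ _ => rfl
  · intro a b
    exact Quotient.inductionOn₂ a b fun _ _ => rfl

/-- For `n ≥ 2` and `m ≥ 1` there is a surjective lattice homomorphism from the free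
Heyting algebra `H_n` onto `H_m`: a surjective map preserving `∧` and `∨`. -/
theorem surjective_lattice_hom_Hn_onto_Hm (n m : ℕ) (hn : 2 ≤ n) (hm : 1 ≤ m) :
    ∃ h : Lindenbaum False (Fin n) → Lindenbaum False (Fin m),
      Function.Surjective h ∧
      (∀ a b, h (Lindenbaum.inf a b) = Lindenbaum.inf (h a) (h b)) ∧
      (∀ a b, h (Lindenbaum.sup a b) = Lindenbaum.sup (h a) (h b)) := by
  change LatticeOnto n m
  rcases le_total m n with h | h
  · exact latticeOnto_of_lt_two_pow n m (by omega) (h.trans_lt Nat.lt_two_pow_self)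
  · clear hm
    induction m, h using Nat.le_induction with
    | base => exact latticeOnto_of_lt_two_pow n n (by omega) Nat.lt_two_pow_self
    | succ k hk ih =>
      refine ih.trans (latticeOnto_of_lt_two_pow k (k + 1) (by omega) ?_)
      obtain ⟨j, rfl⟩ : ∃ j, k = j + 2 := ⟨k - 2, by omega⟩
      have := Nat.lt_two_pow_self (n := j)
      rw [pow_add]
      omega
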